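/- Let r₁,...,r_s ∈ ℂ* be such that no r_i is a root of unity and no ratio r_i/r_j (i ≠ j) is a root of unity, let α₁,...,α_s ∈ ℂ*, let d ≥ 1, and let R₁,...,R_t be polynomials of degree at most d−1 with r'₁,...,r'_t ∈ ℂ* distinct and distinct from the r_i up to combination. Then the sequence m ↦ Σ_j α_j m^d r_j^m + Σ_k R_k(m) (r'_k)^m is a non-degenerate linear recurrence sequence whose dominant polynomial coefficients have degree exactly d, and it vanishes for at most finitely many m ∈ ℕ. -/

import Mathlib

set_option linter.unusedSectionVars false

section SML
open Polynomial Filter Topology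

section Analytic
variable {L : Type*} [NormedField L] [IsUltrametricDist L]

lemma quot_coeff_bound (P q : L[X]) (z : L) (hz : ‖z‖ ≤ 1) (B : ℝ) (hB : 0 ≤ B) (K : ℕ)
    (hP : P = (X - C z) * q) (h : ∀ j, K + 1 ≤ j → ‖P.coeff j‖ ≤ B) :
    ∀ j, K ≤ j → ‖q.coeff j‖ ≤ B := by
  have key : ∀ t j, K ≤ j → q.natDegree < j + t → ‖q.coeff j‖ ≤ B := by
    intro t
    induction t with
    | zero =>
      intro j _ hj
      rw [coeff_eq_zero_of_natDegree_lt (by omega)]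
      simpa using hB
    | succ t ih =>
      intro j hj hd
      have h1 := ih (j + 1) (by omega) (by omega)
      have h2 := h (j + 1) (by omega)
      have h3 : q.coeff j = P.coeff (j + 1) + z * q.coeff (j + 1) := by
        rw [hP, sub_mul, coeff_sub, coeff_X_mul, coeff_C_mul]; ring
      rw [h3]
      refine (IsUltrametricDist.norm_add_le_max _ _).trans (max_le h2 ?_)
      rw [norm_mul]
      calc ‖z‖ * ‖q.coeff (j + 1)‖ ≤ 1 * B := by gcongr
        _ = B := one_mul B
  intro j hj
  exact key (q.natDegree + 1) j hj (by omega)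

lemma quot_prod_coeff_bound (S : Finset ℕ) : ∀ (P q : L[X]) (B : ℝ), 0 ≤ B →
    P = (∏ z ∈ S, (X - C (z : L))) * q → (∀ j, S.card ≤ j → ‖P.coeff j‖ ≤ B) →
    ∀ j, ‖q.coeff j‖ ≤ B := by
  induction S using Finset.induction_on with
  | empty =>
    intro P q B _ hP h j
    simp at hP
    subst hP
    exact h j (by simp)
  | insert a S ha ih =>
    intro P q B hB hP h
    rw [Finset.prod_insert ha, mul_assoc] at hP
    refine ih ((∏ z ∈ S, (X - C (z : L))) * q) q B hB rfl ?_
    refine quot_coeff_bound P _ (a : L) (IsUltrametricDist.norm_natCast_le_one L a) B hB _ hP ?_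
    intro j hj
    exact h j (by rw [Finset.card_insert_of_notMem ha]; exact hj)

lemma eval_bound (q : L[X]) (B : ℝ) (hB : 0 ≤ B) (h : ∀ j, ‖q.coeff j‖ ≤ B) (m : ℕ) :
    ‖q.eval (m : L)‖ ≤ B := by
  rw [eval_eq_sum_range]
  refine IsUltrametricDist.norm_sum_le_of_forall_le_of_nonneg hB ?_
  intro i _
  rw [norm_mul, norm_pow]
  have := pow_le_one₀ (n := i) (norm_nonneg _) (IsUltrametricDist.norm_natCast_le_one L m)
  calc _ ≤ B * 1 := by gcongr; exact h i
    _ = B := mul_one B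

/-- Sequences with a convergent factorial series. -/
def GoodSeq (g : ℕ → L) : Prop :=
  ∃ b : ℕ → L, Tendsto b atTop (𝓝 0) ∧
    ∀ m n : ℕ, m ≤ n → g m = ∑ k ∈ Finset.range (n + 1), b k * (m.descFactorial k : L)

lemma GoodSeq.add {f g : ℕ → L} (hf : GoodSeq f) (hg : GoodSeq g) :
    GoodSeq (fun m => f m + g m) := by
  obtain ⟨b, hb, hb'⟩ := hf
  obtain ⟨c, hc, hc'⟩ := hg
  refine ⟨fun k => b k + c k, by simpa using hb.add hc, ?_⟩
  intro m n hmn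
  simp only [hb' m n hmn, hc' m n hmn, add_mul, Finset.sum_add_distrib]

lemma GoodSeq.smul {f : ℕ → L} (hf : GoodSeq f) (a : L) : GoodSeq (fun m => a * f m) := by
  obtain ⟨b, hb, hb'⟩ := hf
  refine ⟨fun k => a * b k, by simpa using hb.const_mul a, ?_⟩
  intro m n hmn
  simp only [hb' m n hmn, Finset.mul_sum, mul_assoc]

lemma GoodSeq.zero : GoodSeq (fun _ => (0 : L)) :=
  ⟨fun _ => 0, tendsto_const_nhds, by simp⟩

lemma GoodSeq.sum {ι : Type*} (s : Finset ι) (f : ι → ℕ → L) (hf : ∀ i ∈ s, GoodSeq (f i)) :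
    GoodSeq (fun m => ∑ i ∈ s, f i m) := by
  classical
  induction s using Finset.induction_on with
  | empty => simpa using GoodSeq.zero
  | insert a s ha ih =>
    simp only [Finset.sum_insert ha]
    exact (hf a (by simp)).add (ih fun i hi => hf i (by simp [hi]))

lemma GoodSeq.mul_id {f : ℕ → L} (hf : GoodSeq f) : GoodSeq (fun m => (m : L) * f m) := by
  obtain ⟨b, hb, hb'⟩ := hf
  refine ⟨fun k => (k : L) * b k + (if k = 0 then 0 else b (k - 1)), ?_, ?_⟩
  · have h1 : Tendsto (fun k : ℕ => (k : L) * b k) atTop (𝓝 0) := by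
      refine squeeze_zero_norm (a := fun k => ‖b k‖) ?_ (by simpa using hb.norm)
      intro k
      rw [norm_mul]
      exact mul_le_of_le_one_left (norm_nonneg _) (IsUltrametricDist.norm_natCast_le_one L k)
    have h2 : Tendsto (fun k : ℕ => if k = 0 then 0 else b (k - 1)) atTop (𝓝 0) := by
      refine (tendsto_add_atTop_iff_nat 1).1 ?_
      simpa using hb
    simpa using h1.add h2
  · intro m n hmn
    have e : ∀ k, (m : L) * (m.descFactorial k : L)
        = k * m.descFactorial k + m.descFactorial (k + 1) := by
      intro k
      rw [Nat.descFactorial_succ]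
      rcases le_or_gt k m with h | h
      · push_cast [Nat.cast_sub h]; ring
      · simp [Nat.descFactorial_of_lt h]
    have e2 : ∑ k ∈ Finset.range (n + 1), (if k = 0 then 0 else b (k - 1)) *
        (m.descFactorial k : L) = ∑ k ∈ Finset.range (n + 1), b k * m.descFactorial (k + 1) := by
      rw [Finset.sum_range_succ', Finset.sum_range_succ]
      have : m.descFactorial (n + 1) = 0 := Nat.descFactorial_of_lt (by omega)
      simp [this, -Nat.descFactorial_succ]
    simp only [add_mul, Finset.sum_add_distrib]
    rw [e2, hb' m n hmn, Finset.mul_sum, ← Finset.sum_add_distrib]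
    refine Finset.sum_congr rfl fun k _ => ?_
    linear_combination b k * e k

lemma GoodSeq.mul_poly {f : ℕ → L} (hf : GoodSeq f) (P : L[X]) :
    GoodSeq (fun m => P.eval (m : L) * f m) := by
  have hpow : ∀ i : ℕ, GoodSeq (fun m => (m : L) ^ i * f m) := by
    intro i
    induction i with
    | zero => simpa using hf
    | succ i ih =>
      have := ih.mul_id
      refine (congrArg GoodSeq ?_).mp this
      funext m; ring
  have := GoodSeq.sum (Finset.range (P.natDegree + 1))
    (fun i m => P.coeff i * ((m : L) ^ i * f m)) (fun i _ => (hpow i).smul _)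
  refine (congrArg GoodSeq ?_).mp this
  funext m
  rw [eval_eq_sum_range, Finset.sum_mul]
  exact Finset.sum_congr rfl fun i _ => by ring

lemma GoodSeq.pow [CharZero L] (ρ : L) (h : Tendsto (fun k : ℕ => (ρ - 1) ^ k / (k.factorial : L)) atTop (𝓝 0)) :
    GoodSeq (fun m => ρ ^ m) := by
  refine ⟨_, h, ?_⟩
  intro m n hmn
  have h1 : ρ ^ m = ∑ k ∈ Finset.range (m + 1), (ρ - 1) ^ k * (m.choose k : L) := by
    conv_lhs => rw [show ρ = (ρ - 1) + 1 by ring, add_pow]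
    simp
  beta_reduce
  rw [h1]
  have h2 : ∑ k ∈ Finset.range (m + 1), (ρ - 1) ^ k * (m.choose k : L)
      = ∑ k ∈ Finset.range (n + 1), (ρ - 1) ^ k * (m.choose k : L) := by
    refine Finset.sum_subset (fun x hx => by simp at *; omega) ?_
    intro k _ hk
    simp only [Finset.mem_range] at hk
    simp [Nat.choose_eq_zero_of_lt (show m < k by omega)]
  rw [h2]
  refine Finset.sum_congr rfl fun k _ => ?_
  rw [Nat.descFactorial_eq_factorial_mul_choose]
  have : (k.factorial : L) ≠ 0 := by exact_mod_cast k.factorial_ne_zero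
  push_cast
  field_simp

lemma descPoch_coeff_norm (k j : ℕ) : ‖(descPochhammer L k).coeff j‖ ≤ 1 := by
  rw [← descPochhammer_map (Int.castRingHom L), coeff_map]
  exact IsUltrametricDist.norm_intCast_le_one L _

lemma GoodSeq.eq_zero {g : ℕ → L} [CharZero L] (hg : GoodSeq g) (hinf : {m | g m = 0}.Infinite) (m : ℕ) :
    g m = 0 := by
  obtain ⟨b, hb, hb'⟩ := hg
  rw [← norm_le_zero_iff]
  refine le_of_forall_pos_le_add fun ε hε => ?_
  rw [zero_add]
  have hb2 : ∀ᶠ k in atTop, ‖b k‖ < ε := by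
    have := hb.norm
    rw [norm_zero] at this
    exact this.eventually (gt_mem_nhds hε)
  obtain ⟨K, hK⟩ := eventually_atTop.1 hb2
  obtain ⟨S, hS, hcard⟩ := hinf.exists_subset_card_eq K
  set n := m + S.sup id with hn
  set P : L[X] := ∑ k ∈ Finset.range (n + 1), C (b k) * descPochhammer L k with hPdef
  have hPe : ∀ x : ℕ, x ≤ n → P.eval (x : L) = g x := by
    intro x hx
    rw [hb' x n hx, hPdef, eval_finsetSum]
    refine Finset.sum_congr rfl fun k _ => ?_
    rw [eval_mul, eval_C, descPochhammer_eval_eq_descFactorial]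
  have hdvd : (∏ z ∈ S, (X - C (z : L))) ∣ P := by
    refine Finset.prod_dvd_of_coprime ?_ ?_
    · intro x _ y _ hxy
      refine isCoprime_X_sub_C_of_isUnit_sub ?_
      rw [isUnit_iff_ne_zero, sub_ne_zero]
      exact_mod_cast hxy
    · intro z hz
      rw [dvd_iff_isRoot, IsRoot, hPe z]
      · exact hS hz
      · have := Finset.le_sup (f := id) hz
        simp only [id] at this
        omega
  obtain ⟨q, hq⟩ := hdvd
  have hcoef : ∀ j, S.card ≤ j → ‖P.coeff j‖ ≤ ε := by
    intro j hj
    rw [hPdef, finsetSum_coeff]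
    refine IsUltrametricDist.norm_sum_le_of_forall_le_of_nonneg hε.le ?_
    intro k _
    rw [coeff_C_mul, norm_mul]
    rcases lt_or_ge k j with h | h
    · rw [coeff_eq_zero_of_natDegree_lt (by rw [descPochhammer_natDegree]; exact h)]
      simpa using hε.le
    · calc _ ≤ ε * 1 := by
            gcongr
            · exact (hK k (by omega)).le
            · exact descPoch_coeff_norm k j
        _ = ε := mul_one _
  have hqb := quot_prod_coeff_bound S P q ε hε.le hq hcoef
  rw [← hPe m (by omega), hq, eval_mul, norm_mul]
  have h1 : ‖eval (m : L) (∏ z ∈ S, (X - C (z : L)))‖ ≤ 1 := by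
    rw [eval_prod, norm_prod]
    refine Finset.prod_le_one (fun _ _ => norm_nonneg _) ?_
    intro z _
    have := IsUltrametricDist.norm_intCast_le_one L ((m : ℤ) - z)
    simpa using this
  calc _ ≤ 1 * ε := by
        gcongr
        exact eval_bound q ε hε.le hqb m
    _ = ε := one_mul _

end Analytic

/-- Linear independence of exponential polynomials. -/
lemma expPoly_indep {F : Type*} [Field F] [CharZero F] {ι : Type*} (s : Finset ι)
    (ρ : ι → F) (hρ0 : ∀ i ∈ s, ρ i ≠ 0) (hinj : Set.InjOn ρ s) (P : ι → F[X])
    (h : ∀ m : ℕ, ∑ i ∈ s, (P i).eval (m : F) * ρ i ^ m = 0) : ∀ i ∈ s, P i = 0 := by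
  classical
  let E : Module.End F (ℕ → F) := LinearMap.funLeft F F Nat.succ
  have hE : ∀ (u : ℕ → F) n, E u n = u (n + 1) := fun u n => rfl
  have hmem : ∀ (a : F) (n : ℕ) (Q : F[X]), Q.natDegree < n →
      (fun m : ℕ => Q.eval (m : F) * a ^ m) ∈ E.maxGenEigenspace a := by
    intro a n
    induction n with
    | zero => intro Q h; omega
    | succ n ih =>
      intro Q hQ
      set u : ℕ → F := (fun m : ℕ => Q.eval (m : F) * a ^ m) with hu
      suffices hs : (E - a • 1) u ∈ E.maxGenEigenspace a by
        rw [Module.End.mem_maxGenEigenspace] at hs ⊢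
        obtain ⟨k, hk⟩ := hs
        exact ⟨k + 1, by rw [pow_succ]; exact hk⟩
      have e : (E - a • 1) u = a • (fun m : ℕ => (Q.comp (X + 1) - Q).eval (m : F) * a ^ m) := by
        funext m
        simp [hE, hu, LinearMap.sub_apply, LinearMap.smul_apply]
        ring
      rw [e]
      refine Submodule.smul_mem _ _ ?_
      by_cases hd : Q.natDegree = 0
      · have : Q.comp (X + 1) - Q = 0 := by
          rw [eq_C_of_natDegree_eq_zero hd]; simp
        rw [this]
        convert Submodule.zero_mem _
        simp
      · apply ih
        have hdeg : (Q.comp (X + 1)).degree = Q.degree := by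
          have h1 : (Q.comp (X + 1)).natDegree = Q.natDegree := by
            rw [natDegree_comp, ← C_1, natDegree_X_add_C, mul_one]
          have hQ0 : Q ≠ 0 := by rintro rfl; simp at hd
          rw [degree_eq_natDegree hQ0, degree_eq_natDegree, h1]
          intro h0
          rw [h0] at h1; simp at h1; omega
        have hlt : (Q.comp (X + 1) - Q).degree < (Q.comp (X + 1)).degree := by
          refine degree_sub_lt_left hdeg ?_ ?_
          · rintro h0
            rw [h0, degree_zero] at hdeg
            rw [degree_eq_bot.1 hdeg.symm] at hd; simp at hd
          · rw [leadingCoeff_comp (by rw [← C_1, natDegree_X_add_C]; simp), ← C_1,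
              leadingCoeff_X_add_C, one_pow, mul_one]
        rw [hdeg] at hlt
        have : (Q.comp (X + 1) - Q).natDegree < Q.natDegree := by
          by_cases h0 : Q.comp (X + 1) - Q = 0
          · rw [h0, natDegree_zero]; omega
          · exact natDegree_lt_natDegree h0 hlt
        omega
  have hind := E.independent_maxGenEigenspace
  have hz : ∀ i ∈ s, (fun m : ℕ => (P i).eval (m : F) * ρ i ^ m) = 0 := by
    have hind2 : iSupIndep (fun i : s => E.maxGenEigenspace (ρ i)) :=
      hind.comp (f := fun i : s => ρ i) (fun x y hxy => Subtype.ext (hinj x.2 y.2 hxy))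
    have h3 := (iSupIndep_iff_finsetSum_eq_zero_imp_eq_zero _).1 hind2
    intro i hi
    have := h3 Finset.univ (fun i : s => fun m : ℕ => (P i).eval (m : F) * ρ i ^ m)
      (fun i _ => hmem _ _ _ (Nat.lt_succ_self _)) (by
        funext m
        rw [Finset.sum_apply, Finset.sum_coe_sort s (fun i => (P i).eval (m : F) * ρ i ^ m)]
        exact h m) ⟨i, hi⟩ (Finset.mem_univ _)
    exact this
  intro i hi
  have h0 := hz i hi
  refine eq_of_infinite_eval_eq _ _ ((Set.infinite_range_of_injective
    (Nat.cast_injective (R := F))).mono ?_)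
  rintro _ ⟨m, rfl⟩
  have := congrFun h0 m
  simpa [hρ0 i hi] using this

section Padic
variable {p : ℕ} [hp : Fact p.Prime]

lemma padicAlgCl_norm_nat (n : ℕ) : ‖(n : PadicAlgCl p)‖ = ‖(n : ℚ_[p])‖ := by
  rw [← PadicAlgCl.norm_extends]
  simp

lemma padicAlgCl_norm_factorial (k : ℕ) :
    ((p : ℝ)⁻¹) ^ k ≤ ‖(k.factorial : PadicAlgCl p)‖ := by
  rw [padicAlgCl_norm_nat, Padic.norm_eq_zpow_neg_valuation
    (by exact_mod_cast k.factorial_ne_zero), Padic.valuation_natCast, zpow_neg, zpow_natCast,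
    inv_pow]
  have hp1 : (1 : ℝ) ≤ p := by exact_mod_cast hp.out.one_lt.le
  have hle : padicValNat p k.factorial ≤ k := by
    have h1 := sub_one_mul_padicValNat_factorial (p := p) k
    have h2 : 1 ≤ p - 1 := by have := hp.out.two_le; omega
    nlinarith [Nat.sub_le k (p.digits k).sum]
  gcongr


lemma tendsto_pow_div_factorial_padic (ρ : PadicAlgCl p) (h : ‖ρ‖ < (p : ℝ)⁻¹) :
    Tendsto (fun k : ℕ => ρ ^ k / (k.factorial : PadicAlgCl p)) atTop (𝓝 0) := by
  have hp0 : (0 : ℝ) < p := by exact_mod_cast hp.out.pos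
  refine squeeze_zero_norm (a := fun k : ℕ => (‖ρ‖ * p) ^ k) ?_ ?_
  · intro k
    rw [norm_div, norm_pow, mul_pow, div_eq_mul_inv]
    gcongr
    rw [inv_le_comm₀ (lt_of_lt_of_le (by positivity) (padicAlgCl_norm_factorial k)) (by positivity),
      ← inv_pow]
    exact padicAlgCl_norm_factorial k
  · refine tendsto_pow_atTop_nhds_zero_of_lt_one (by positivity) ?_
    rwa [← lt_div_iff₀ hp0, one_div]

lemma exists_pow_near_one (r : PadicAlgCl p) (hr : ‖r‖ = 1) (ε : ℝ) (hε : 0 < ε) :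
    ∃ N : ℕ, 0 < N ∧ ‖r ^ N - 1‖ < ε := by
  let A := Algebra.adjoin ℚ_[p] {r}
  have hZint : IsIntegral ℚ_[p] r := (Algebra.IsAlgebraic.isAlgebraic r).isIntegral
  have hfin : FiniteDimensional ℚ_[p] (Subalgebra.toSubmodule A) :=
    Module.Finite.iff_fg.2 hZint.fg_adjoin_singleton
  have : ProperSpace (Subalgebra.toSubmodule A) := FiniteDimensional.proper ℚ_[p] _
  have hmem : ∀ n : ℕ, r ^ n ∈ Subalgebra.toSubmodule A := fun n =>
    A.pow_mem (Algebra.subset_adjoin rfl) n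
  let u : ℕ → Subalgebra.toSubmodule A := fun n => ⟨r ^ n, hmem n⟩
  have hu : ∀ n, u n ∈ Metric.closedBall (0 : Subalgebra.toSubmodule A) 1 := by
    intro n
    rw [mem_closedBall_zero_iff]
    change ‖r ^ n‖ ≤ 1
    rw [norm_pow, hr, one_pow]
  obtain ⟨a, _, φ, hφ, hlim⟩ := (isCompact_closedBall (0 : Subalgebra.toSubmodule A) 1).tendsto_subseq hu
  obtain ⟨M, hM⟩ := Metric.cauchySeq_iff'.1 hlim.cauchySeq ε hε
  have h1 := hM (M + 1) (by omega)
  have hlt := hφ (Nat.lt_succ_self M)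
  refine ⟨φ (M + 1) - φ M, Nat.sub_pos_of_lt hlt, ?_⟩
  rw [dist_eq_norm] at h1
  change ‖r ^ φ (M + 1) - r ^ φ M‖ < ε at h1
  have h2 : r ^ φ (M + 1) - r ^ φ M = r ^ φ M * (r ^ (φ (M + 1) - φ M) - 1) := by
    rw [mul_sub, ← pow_add, mul_one]
    congr 2
    have : φ M < φ (M + 1) := hlt
    omega
  rw [h2, norm_mul, norm_pow, hr, one_pow, one_mul] at h1
  exact h1

lemma norm_pow_sub_one_le {L : Type*} [NormedField L] [IsUltrametricDist L] (x : L) (hx : ‖x‖ = 1) (k : ℕ) :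
    ‖x ^ k - 1‖ ≤ ‖x - 1‖ := by
  rw [← geom_sum_mul, norm_mul]
  refine mul_le_of_le_one_left (norm_nonneg _) ?_
  refine IsUltrametricDist.norm_sum_le_of_forall_le_of_nonneg zero_le_one ?_
  intro i _
  rw [norm_pow, hx, one_pow]

lemma exists_common_pow (s : Finset (PadicAlgCl p)) (hs : ∀ r ∈ s, ‖r‖ = 1) (ε : ℝ) (hε : 0 < ε) :
    ∃ N : ℕ, 0 < N ∧ ∀ r ∈ s, ‖r ^ N - 1‖ < ε := by
  classical
  induction s using Finset.induction_on with
  | empty => exact ⟨1, one_pos, by simp⟩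
  | insert a s ha ih =>
    obtain ⟨N, hN, h⟩ := ih fun r hr => hs r (by simp [hr])
    obtain ⟨M, hM, h'⟩ := exists_pow_near_one a (hs a (by simp)) ε hε
    refine ⟨N * M, by positivity, ?_⟩
    intro r hr
    rcases Finset.mem_insert.1 hr with rfl | hr'
    · rw [mul_comm, pow_mul]
      exact (norm_pow_sub_one_le _ (by rw [norm_pow, hs r hr, one_pow]) N).trans_lt h'
    · rw [pow_mul]
      exact (norm_pow_sub_one_le _ (by rw [norm_pow, hs r hr, one_pow]) M).trans_lt (h r hr')

end Padic

section Embed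

lemma norm_le_one_of_integral {L : Type*} [NormedField L] [IsUltrametricDist L]
    {R : Type*} [CommRing R] [Algebra R L] (hR : ∀ a : R, ‖algebraMap R L a‖ ≤ 1)
    (y : L) (hy : IsIntegral R y) : ‖y‖ ≤ 1 := by
  obtain ⟨P, hP, hy⟩ := hy
  by_contra! hlt
  have h1 : y ^ P.natDegree = - ∑ i ∈ Finset.range P.natDegree, algebraMap R L (P.coeff i) * y ^ i := by
    rw [eval₂_eq_sum_range, Finset.sum_range_succ, hP.coeff_natDegree, map_one, one_mul] at hy
    linear_combination hy
  have hd : P.natDegree ≠ 0 := by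
    intro h0
    rw [h0] at h1
    simp at h1
  have h2 : ‖y ^ P.natDegree‖ ≤ ‖y‖ ^ (P.natDegree - 1) := by
    rw [h1, norm_neg]
    refine IsUltrametricDist.norm_sum_le_of_forall_le_of_nonneg (by positivity) ?_
    intro i hi
    rw [Finset.mem_range] at hi
    rw [norm_mul, norm_pow]
    calc _ ≤ 1 * ‖y‖ ^ (P.natDegree - 1) := by
          gcongr
          · exact hR _
          · exact hlt.le
          · omega
      _ = _ := one_mul _
  rw [norm_pow] at h2
  have h3 := pow_lt_pow_right₀ hlt (show P.natDegree - 1 < P.natDegree by omega)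
  linarith

lemma mvPoly_norm {L : Type*} [NormedField L] [IsUltrametricDist L] {ι : Type*} (ξ : ι → L) (a : ι → ℤ)
    (h : ∀ i, ‖ξ i - (a i : L)‖ < 1) (f : MvPolynomial ι ℤ) :
    ‖MvPolynomial.aeval ξ f‖ ≤ 1 ∧ ‖MvPolynomial.aeval ξ f - ((MvPolynomial.eval a f : ℤ) : L)‖ < 1 := by
  have hZint := fun n : ℤ => IsUltrametricDist.norm_intCast_le_one L n
  have aux : ∀ (x : L) (n : ℤ), ‖x - n‖ < 1 → ‖x‖ ≤ 1 := by
    intro x n hx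
    rw [show x = (x - n) + n by ring]
    exact (IsUltrametricDist.norm_add_le_max _ _).trans (max_le hx.le (hZint n))
  suffices hs : ‖MvPolynomial.aeval ξ f - ((MvPolynomial.eval a f : ℤ) : L)‖ < 1 from
    ⟨aux _ _ hs, hs⟩
  induction f using MvPolynomial.induction_on with
  | C c => simp
  | add f g hf hg =>
    rw [map_add, map_add, Int.cast_add, add_sub_add_comm]
    exact (IsUltrametricDist.norm_add_le_max _ _).trans_lt (max_lt hf hg)
  | mul_X f i hf =>
    rw [map_mul, map_mul, Int.cast_mul, MvPolynomial.aeval_X, MvPolynomial.eval_X]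
    rw [show ∀ x y z w : L, x * y - z * w = x * (y - w) + (x - z) * w by intros; ring]
    refine (IsUltrametricDist.norm_add_le_max _ _).trans_lt (max_lt ?_ ?_)
    · rw [norm_mul]
      exact (mul_le_of_le_one_left (norm_nonneg _) (aux _ _ hf)).trans_lt (h i)
    · rw [norm_mul]
      exact (mul_le_of_le_one_right (norm_nonneg _) (hZint _)).trans_lt hf

lemma algIndep_affine {L : Type*} [Field L] [CharZero L] {ι : Type*} (t : ι → L)
    (ht : AlgebraicIndependent ℚ t) (a c : ι → ℚ) (hc : ∀ i, c i ≠ 0) :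
    AlgebraicIndependent ℚ (fun i => (a i : L) + (c i : L) * t i) := by
  let φ : MvPolynomial ι ℚ →ₐ[ℚ] MvPolynomial ι ℚ :=
    MvPolynomial.aeval fun i => MvPolynomial.C (a i) + MvPolynomial.C (c i) * MvPolynomial.X i
  let ψ : MvPolynomial ι ℚ →ₐ[ℚ] MvPolynomial ι ℚ :=
    MvPolynomial.aeval fun i => MvPolynomial.C ((c i)⁻¹) * (MvPolynomial.X i - MvPolynomial.C (a i))
  have h1 : ψ.comp φ = AlgHom.id ℚ _ := by
    ext1 i
    simp only [φ, ψ, AlgHom.comp_apply, MvPolynomial.aeval_X, map_add, map_mul,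
      MvPolynomial.algHom_C, AlgHom.id_apply, MvPolynomial.algebraMap_eq]
    rw [← mul_assoc, ← map_mul, mul_inv_cancel₀ (hc i), map_one]
    ring
  have h2 : Function.Injective φ := by
    intro x y hxy
    have := congrArg ψ hxy
    rwa [← AlgHom.comp_apply, ← AlgHom.comp_apply, h1] at this
  have h3 : (MvPolynomial.aeval (fun i => (a i : L) + (c i : L) * t i) : MvPolynomial ι ℚ →ₐ[ℚ] L)
      = (MvPolynomial.aeval t).comp φ := by
    ext1 i
    simp [φ]
  have h4 : Function.Injective ((MvPolynomial.aeval t : MvPolynomial ι ℚ →ₐ[ℚ] L) ∘ φ) :=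
    Function.Injective.comp ht h2
  rw [AlgebraicIndependent, h3]
  exact h4

lemma exists_indep_near (p : ℕ) [hp : Fact p.Prime] (ι : Type) (hι : Cardinal.mk ι ≤ Cardinal.continuum)
    (a : ι → ℤ) : ∃ ξ : ι → PadicAlgCl p, AlgebraicIndependent ℤ ξ ∧ ∀ i, ‖ξ i - (a i : PadicAlgCl p)‖ < 1 := by
  have hcard : Cardinal.continuum ≤ Cardinal.mk (PadicAlgCl p) :=
    (continuum_le_cardinal_of_nontriviallyNormedField ℚ_[p]).trans
      (Cardinal.mk_le_of_injective (algebraMap ℚ_[p] (PadicAlgCl p)).injective)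
  obtain ⟨T, hT⟩ := exists_isTranscendenceBasis ℚ (PadicAlgCl p)
  have hTc := IsAlgClosed.cardinal_eq_cardinal_transcendence_basis_of_aleph0_lt _ hT
    Cardinal.mkRat.le (Cardinal.aleph0_lt_continuum.trans_le hcard)
  rw [Cardinal.lift_id, Cardinal.lift_id] at hTc
  obtain ⟨e⟩ : Nonempty (ι ↪ T) := by
    rw [← Cardinal.le_def, ← hTc]; exact hι.trans hcard
  have ht : AlgebraicIndependent ℚ (fun i => (e i : PadicAlgCl p)) := hT.1.comp e e.injective
  have hp1 : ‖(p : PadicAlgCl p)‖ < 1 := by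
    rw [padicAlgCl_norm_nat]; exact Padic.norm_p_lt_one
  have hk : ∀ i, ∃ k : ℕ, ‖(p : PadicAlgCl p) ^ k * (e i : PadicAlgCl p)‖ < 1 := by
    intro i
    have := (tendsto_pow_atTop_nhds_zero_of_norm_lt_one hp1).mul_const (e i : PadicAlgCl p)
    rw [zero_mul] at this
    have := this.norm
    rw [norm_zero] at this
    exact (this.eventually (gt_mem_nhds one_pos)).exists
  choose k hk using hk
  refine ⟨_, (algIndep_affine _ ht (fun i => a i) (fun i => (p : ℚ) ^ k i)
    (fun i => pow_ne_zero _ (by exact_mod_cast hp.out.ne_zero))).restrictScalars (R := ℤ) Int.cast_injective, ?_⟩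
  intro i
  simpa using hk i

theorem exists_padic_embedding (S : Finset ℂ) : ∃ (p : ℕ) (_ : Fact p.Prime) (σ : ℂ →+* PadicAlgCl p),
    ∀ y ∈ S, ‖σ y‖ ≤ 1 := by
  classical
  obtain ⟨B, hB⟩ := exists_isTranscendenceBasis ℤ ℂ
  let x : B → ℂ := Subtype.val
  let R := Algebra.adjoin ℤ (Set.range x)
  have halg : Algebra.IsAlgebraic R ℂ := hB.isAlgebraic
  have hx : AlgebraicIndependent ℤ x := hB.1
  let e : MvPolynomial B ℤ ≃ₐ[ℤ] R := hx.aevalEquiv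
  have hg : ∀ y : ℂ, ∃ g : R, g ≠ 0 ∧ IsIntegral R (g • y) := fun y =>
    (halg.isAlgebraic y).exists_integral_multiple
  choose g hg0 hgi using hg
  let G : MvPolynomial B ℤ := ∏ y ∈ S, e.symm (g y)
  have hG : G ≠ 0 := by
    refine Finset.prod_ne_zero_iff.2 fun y _ => ?_
    simpa using hg0 y
  obtain ⟨a, ha⟩ : ∃ a : B → ℤ, MvPolynomial.eval a G ≠ 0 := by
    by_contra! h
    exact hG (MvPolynomial.funext (by simpa using h))
  obtain ⟨p, hpge, hpp⟩ := Nat.exists_infinite_primes ((MvPolynomial.eval a G).natAbs + 1)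
  have hp : Fact p.Prime := ⟨hpp⟩
  have hndvd : ¬ (p : ℤ) ∣ MvPolynomial.eval a G := by
    intro h
    have := Nat.le_of_dvd (Int.natAbs_pos.2 ha) (Int.natCast_dvd.1 h)
    omega
  obtain ⟨ξ, hξ, hξa⟩ := exists_indep_near p B
    ((Cardinal.mk_set_le B).trans Cardinal.mk_complex.le) a
  let τ : R →+* PadicAlgCl p := (MvPolynomial.aeval ξ : MvPolynomial B ℤ →ₐ[ℤ] PadicAlgCl p).toRingHom.comp
    e.symm.toAlgHom.toRingHom
  have hτ : ∀ z, τ z = MvPolynomial.aeval ξ (e.symm z) := fun z => rfl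
  have hτinj : Function.Injective τ := by
    intro u v huv
    rw [hτ, hτ] at huv
    exact e.symm.injective (hξ huv)
  let : Algebra R (PadicAlgCl p) := τ.toAlgebra
  have hmap : ∀ z, algebraMap R (PadicAlgCl p) z = τ z := fun z => rfl
  have : FaithfulSMul R (PadicAlgCl p) := (faithfulSMul_iff_algebraMap_injective _ _).2 hτinj
  have : Module.IsTorsionFree R (PadicAlgCl p) := inferInstance
  let σ : ℂ →ₐ[R] PadicAlgCl p := IsAlgClosed.lift
  refine ⟨p, hp, σ.toRingHom, ?_⟩
  intro y hy
  change ‖σ y‖ ≤ 1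
  have h1 : ‖σ (g y • y)‖ ≤ 1 := by
    refine norm_le_one_of_integral (R := R) ?_ _ ((hgi y).map σ)
    intro z
    rw [hmap, hτ]
    exact (mvPoly_norm ξ a hξa _).1
  have h2 : ‖τ (g y)‖ = 1 := by
    rw [hτ]
    set f := e.symm (g y) with hf
    obtain ⟨h3, h4⟩ := mvPoly_norm ξ a hξa f
    have h5 : ¬ (p : ℤ) ∣ MvPolynomial.eval a f := by
      intro h
      refine hndvd (h.trans ?_)
      rw [map_prod]
      exact Finset.dvd_prod_of_mem (fun y => MvPolynomial.eval a (e.symm (g y))) hy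
    have h6 : ‖((MvPolynomial.eval a f : ℤ) : PadicAlgCl p)‖ = 1 := by
      have : ‖((MvPolynomial.eval a f : ℤ) : PadicAlgCl p)‖ = ‖((MvPolynomial.eval a f : ℤ) : ℚ_[p])‖ := by
        rw [← PadicAlgCl.norm_extends]; simp
      rw [this]
      refine le_antisymm (Padic.norm_int_le_one _) (not_lt.1 ?_)
      rwa [Padic.norm_intCast_lt_one_iff]
    refine le_antisymm h3 (not_lt.1 fun h7 => ?_)
    have h8 := (norm_sub_rev _ _).trans_lt h4
    have := (IsUltrametricDist.norm_add_le_max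
      (((MvPolynomial.eval a f : ℤ) : PadicAlgCl p) - MvPolynomial.aeval ξ f) (MvPolynomial.aeval ξ f)).trans_lt (max_lt h8 h7)
    rw [sub_add_cancel, h6] at this
    exact lt_irrefl _ this
  rw [Algebra.smul_def, map_mul, AlgHom.commutes, norm_mul, hmap, h2, one_mul] at h1
  exact h1

end Embed

theorem skolem_mahler_lech_nondeg (U : Finset ℂ) (h0 : ∀ u ∈ U, u ≠ 0)
    (hnd : ∀ u ∈ U, ∀ v ∈ U, u ≠ v → ∀ m : ℕ, 0 < m → (u / v) ^ m ≠ 1) (P : ℂ → ℂ[X])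
    (hinf : {m : ℕ | ∑ u ∈ U, (P u).eval (m : ℂ) * u ^ m = 0}.Infinite) :
    ∀ u ∈ U, P u = 0 := by
  classical
  obtain ⟨p, hp, σ, hσ⟩ := exists_padic_embedding (U ∪ U.image (fun u => u⁻¹))
  have hnorm : ∀ u ∈ U, ‖σ u‖ = 1 := by
    intro u hu
    have h1 := hσ u (by simp [hu])
    have h2 := hσ u⁻¹ (Finset.mem_union_right _ (Finset.mem_image_of_mem _ hu))
    rw [map_inv₀, norm_inv] at h2
    have h3 : 0 < ‖σ u‖ := norm_pos_iff.2 (by simpa using h0 u hu)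
    exact le_antisymm h1 ((inv_le_one₀ h3).1 h2)
  have hp0 : (0 : ℝ) < (p : ℝ)⁻¹ := by
    have : (0 : ℝ) < p := by exact_mod_cast hp.out.pos
    positivity
  obtain ⟨N, hN, hNr⟩ := exists_common_pow (U.image σ) (by
    intro r hr
    obtain ⟨u, hu, rfl⟩ := Finset.mem_image.1 hr
    exact hnorm u hu) _ hp0
  -- an infinite residue class
  obtain ⟨c, hc, hcinf⟩ : ∃ c, c < N ∧
      {m : ℕ | ∑ u ∈ U, (P u).eval ((c + N * m : ℕ) : ℂ) * u ^ (c + N * m) = 0}.Infinite := by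
    by_contra! h
    refine hinf ?_
    have hfin : (⋃ c ∈ Set.Iio N, (fun m => c + N * m) ''
      {m : ℕ | ∑ u ∈ U, (P u).eval ((c + N * m : ℕ) : ℂ) * u ^ (c + N * m) = 0}).Finite := by
      refine Set.Finite.biUnion (Set.finite_Iio N) ?_
      intro c hc
      exact (h c hc).image _
    refine hfin.subset ?_
    intro n hn
    refine Set.mem_biUnion (x := n % N) (Nat.mod_lt _ hN) ⟨n / N, ?_, Nat.mod_add_div n N⟩
    simp only [Set.mem_ofPred_eq, Nat.mod_add_div]
    exact hn
  -- the polynomials on the residue class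
  let Q : ℂ → ℂ[X] := fun u => C (u ^ c) * (P u).comp (C (c : ℂ) + C (N : ℂ) * X)
  have hQ : ∀ u (m : ℕ), (P u).eval ((c + N * m : ℕ) : ℂ) * u ^ (c + N * m)
      = (Q u).eval (m : ℂ) * (u ^ N) ^ m := by
    intro u m
    simp only [Q, eval_mul, eval_C, eval_comp, eval_add, eval_X]
    push_cast
    rw [pow_add, pow_mul]
    ring
  have hgood : GoodSeq (fun m : ℕ => ∑ u ∈ U, ((Q u).map σ).eval (m : PadicAlgCl p) * (σ u ^ N) ^ m) := by
    refine GoodSeq.sum _ (fun u m => ((Q u).map σ).eval (m : PadicAlgCl p) * (σ u ^ N) ^ m) ?_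
    intro u hu
    refine GoodSeq.mul_poly (GoodSeq.pow _ ?_) _
    exact tendsto_pow_div_factorial_padic _ (hNr _ (Finset.mem_image_of_mem _ hu))
  have htrans : ∀ m : ℕ, ∑ u ∈ U, ((Q u).map σ).eval (m : PadicAlgCl p) * (σ u ^ N) ^ m
      = σ (∑ u ∈ U, (Q u).eval (m : ℂ) * (u ^ N) ^ m) := by
    intro m
    rw [map_sum]
    refine Finset.sum_congr rfl fun u _ => ?_
    rw [map_mul, map_pow, map_pow, ← map_natCast σ m, eval_map_apply]
  have hzero : ∀ m : ℕ, ∑ u ∈ U, (Q u).eval (m : ℂ) * (u ^ N) ^ m = 0 := by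
    intro m
    have := hgood.eq_zero (hcinf.mono ?_) m
    · beta_reduce at this
      rw [htrans] at this
      exact (map_eq_zero σ).1 this
    · intro m hm
      simp only [Set.mem_ofPred_eq] at hm ⊢
      simp only [hQ] at hm
      rw [htrans, hm, map_zero]
  have hQ0 := expPoly_indep U (fun u => u ^ N) (fun u hu => pow_ne_zero _ (h0 u hu)) (by
    intro u hu v hv huv
    by_contra hne
    refine hnd u hu v hv hne N hN ?_
    rw [div_pow, div_eq_one_iff_eq (pow_ne_zero _ (h0 v hv))]
    exact huv) Q hzero
  intro u hu
  have h1 := hQ0 u hu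
  simp only [Q, mul_eq_zero, C_eq_zero, pow_eq_zero_iff', h0 u hu, false_and, false_or] at h1
  rw [comp_eq_zero_iff] at h1
  rcases h1 with h1 | ⟨_, h1⟩
  · exact h1
  · exfalso
    have := congrArg (fun q => q.coeff 1) h1
    simp [coeff_C] at this
    omega

end SML

/-- A non-degenerate exponential polynomial
`m ↦ Σ_j α_j m^d r_j^m + Σ_k R_k(m) (r'_k)^m`, where the `r_j` are not roots
of unity, pairwise ratios of distinct roots are not roots of unity, all
`α_j ≠ 0`, and the `R_k` have degree at most `d - 1`, vanishes for at most
finitely many `m ∈ ℕ`. -/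
theorem stmt_19 (s t d : ℕ) (hs : 0 < s) (hd : 1 ≤ d)
    (r : Fin s → ℂ) (α : Fin s → ℂ) (r' : Fin t → ℂ) (R : Fin t → Polynomial ℂ)
    (hr0 : ∀ i, r i ≠ 0) (hα : ∀ i, α i ≠ 0)
    (hru : ∀ i, ¬∃ m : ℕ, 0 < m ∧ r i ^ m = 1)
    (hratio : ∀ i j, i ≠ j → ¬∃ m : ℕ, 0 < m ∧ (r i / r j) ^ m = 1)
    (hr'0 : ∀ p, r' p ≠ 0)
    (hr'distinct : ∀ p q, p ≠ q → r' p ≠ r' q)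
    (hr'ratio : ∀ p q, p ≠ q → ¬∃ m : ℕ, 0 < m ∧ (r' p / r' q) ^ m = 1)
    (hmix : ∀ p i, r' p = r i ∨ ¬∃ m : ℕ, 0 < m ∧ (r' p / r i) ^ m = 1)
    (hdeg : ∀ p, (R p).natDegree ≤ d - 1) :
    {m : ℕ | ∑ j, α j * (m : ℂ) ^ d * r j ^ m
        + ∑ p, (R p).eval (m : ℂ) * r' p ^ m = 0}.Finite := by
  classical
  by_contra hinf
  let U : Finset ℂ := Finset.univ.image r ∪ Finset.univ.image r'
  let P : ℂ → Polynomial ℂ := fun u =>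
    ∑ j, (if r j = u then Polynomial.C (α j) * Polynomial.X ^ d else 0)
      + ∑ q, (if r' q = u then R q else 0)
  have hrU : ∀ j, r j ∈ U := fun j => by simp [U]
  have hr'U : ∀ q, r' q ∈ U := fun q => by simp [U]
  have hmemU : ∀ u ∈ U, (∃ j, r j = u) ∨ ∃ q, r' q = u := by
    intro u hu
    simpa [U] using hu
  have h0 : ∀ u ∈ U, u ≠ 0 := by
    intro u hu
    rcases hmemU u hu with ⟨j, rfl⟩ | ⟨q, rfl⟩
    · exact hr0 j
    · exact hr'0 q
  have hsum : ∀ m : ℕ, ∑ u ∈ U, (P u).eval (m : ℂ) * u ^ m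
      = ∑ j, α j * (m : ℂ) ^ d * r j ^ m + ∑ q, (R q).eval (m : ℂ) * r' q ^ m := by
    intro m
    simp only [P, Polynomial.eval_add, Polynomial.eval_finsetSum, add_mul, Finset.sum_mul,
      Finset.sum_add_distrib]
    congr 1
    · rw [Finset.sum_comm]
      refine Finset.sum_congr rfl fun j _ => ?_
      rw [Finset.sum_eq_single (r j)]
      · simp
      · intro u _ hu
        simp [hu.symm]
      · intro h
        exact absurd (hrU j) h
    · rw [Finset.sum_comm]
      refine Finset.sum_congr rfl fun q _ => ?_
      rw [Finset.sum_eq_single (r' q)]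
      · simp
      · intro u _ hu
        simp [hu.symm]
      · intro h
        exact absurd (hr'U q) h
  have hnd : ∀ u ∈ U, ∀ v ∈ U, u ≠ v → ∀ m : ℕ, 0 < m → (u / v) ^ m ≠ 1 := by
    intro u hu v hv huv m hm h1
    rcases hmemU u hu with ⟨i, rfl⟩ | ⟨q, rfl⟩ <;> rcases hmemU v hv with ⟨j, rfl⟩ | ⟨q', rfl⟩
    · exact hratio i j (fun h => huv (by rw [h])) ⟨m, hm, h1⟩
    · rcases hmix q' i with h | h
      · exact huv h.symm
      · refine h ⟨m, hm, ?_⟩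
        rw [← inv_div, inv_pow, h1, inv_one]
    · rcases hmix q j with h | h
      · exact huv h
      · exact h ⟨m, hm, h1⟩
    · exact hr'ratio q q' (fun h => huv (by rw [h])) ⟨m, hm, h1⟩
  have hP := skolem_mahler_lech_nondeg U h0 hnd P (by
    simp only [hsum]
    exact hinf) (r ⟨0, hs⟩) (hrU _)
  have hrinj : ∀ i j, r i = r j → i = j := by
    intro i j h
    by_contra hne
    refine hratio i j hne ⟨1, one_pos, ?_⟩
    rw [h, div_self (hr0 j), one_pow]
  have hcoeff := congrArg (fun q : Polynomial ℂ => q.coeff d) hP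
  simp only [P, Polynomial.coeff_add, Polynomial.finsetSum_coeff, Polynomial.coeff_zero] at hcoeff
  rw [Finset.sum_eq_single (⟨0, hs⟩ : Fin s), Finset.sum_eq_zero] at hcoeff
  · simp at hcoeff
    exact hα _ hcoeff
  · intro q _
    split_ifs
    · exact Polynomial.coeff_eq_zero_of_natDegree_lt (by have := hdeg q; omega)
    · simp
  · intro j _ hj
    rw [if_neg (fun h => hj (hrinj _ _ h))]
    simp
  · intro h
    exact absurd (Finset.mem_univ _) h
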